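/- Moving particle lemma for the exclusion process (main theorem): on a finite connected weighted graph $(V,c)$, for every $\alpha\in[0,1]$, all $x\neq y$ in $V$, and every $f:\{0,1\}^V\to\mathbb{R}$, $\frac12\,\nu_\alpha[(f(\zeta^{xy})-f(\zeta))^2] \leq R_{\mathrm{eff}}(x,y)\cdot\frac12\sum_{\{z,w\}} c_{zw}\,\nu_\alpha[(f(\zeta^{zw})-f(\zeta))^2]$. -/

import Mathlib

/-!
Multiplying `f` by the square root of an exchangeable weight turns the weighted Dirichlet form of
an exchange into the counting one, `D i j = ∑ ζ, (F ζ - F (ζ ∘ swap i j)) ^ 2`.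

The octopus inequality `∑ i j, q i * q j * D i j ≤ 0`, for weights `q` of total mass zero with a
single negative entry, comes from expanding the square norm of `∑ i j, q i * q j * ∇ᵢⱼ F`, where
`∇ᵢⱼ F = F - F ∘ exchange i j`. Among three sites two carry the same value, so the inner products
of `∇ᵢⱼ F` and `∇ₖₗ F` sharing a site are combinations of values of `D`, and together they
contribute `-(∑ i, q i ^ 2)` times the quadratic form of `D`. The remaining terms sum the symmetric
kernel `∑ ⟨∇ᵢⱼ F, ∇ₖₗ F⟩` over the three matchings of four distinct sites; an inequality on five
sites, whose gap is a sum of squares, shows that their total is nonpositive.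

The sites other than `x` and `y` are then eliminated one at a time by the star-mesh transformation.
It adds to the conductances the rank-one matrix `q i * q j / C`, where `q` is minus the row of the
Laplacian at the eliminated site and `C` its total conductance. By the octopus inequality this does
not increase the energy of `D`. For the kernel `(h z - h w) ^ 2` the quadratic form is
`-2 * (∑ i, q i * h i) ^ 2`, which vanishes when `h` is harmonic at the eliminated site, so the
effective conductance does not decrease. With only `x` and `y` left, the bound is immediate.
-/

open Finset

noncomputable section

def elEnergy {V : Type*} [Fintype V] (c : V → V → ℝ) (h : V → ℝ) : ℝ :=
  (1 / 2) * ∑ z, ∑ w, c z w * (h z - h w) ^ 2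

def ceff {V : Type*} [Fintype V] (c : V → V → ℝ) (x y : V) : ℝ :=
  sInf {E : ℝ | ∃ h : V → ℝ, h x = 1 ∧ h y = 0 ∧ elEnergy c h = E}

def bweight {V : Type*} [Fintype V] (α : ℝ) (ζ : V → Bool) : ℝ :=
  ∏ x, if ζ x then α else 1 - α

def bexp {V : Type*} [Fintype V] [DecidableEq V] (α : ℝ) (g : (V → Bool) → ℝ) : ℝ :=
  ∑ ζ : V → Bool, bweight α ζ * g ζ

section Resampling

variable {V ι β : Type*}

theorem extend_comp_swap [DecidableEq V] [DecidableEq ι] {p : ι → V}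
    (hp : Function.Injective p) (s : ι → β) (ξ : V → β) (i j : ι) :
    Function.extend p s ξ ∘ Equiv.swap (p i) (p j) =
      Function.extend p (s ∘ Equiv.swap i j) ξ := by
  funext a
  by_cases ha : ∃ k, p k = a
  · obtain ⟨k, rfl⟩ := ha
    rw [Function.comp_apply, hp.extend_apply, ← hp.map_swap, hp.extend_apply, Function.comp_apply]
  · rw [Function.comp_apply, Equiv.swap_apply_of_ne_of_ne (fun h => ha ⟨i, h.symm⟩)
      (fun h => ha ⟨j, h.symm⟩), Function.extend_apply' _ _ _ ha, Function.extend_apply' _ _ _ ha]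

theorem sum_sum_extend [Fintype V] [DecidableEq V] [Fintype ι] [DecidableEq ι] [Fintype β]
    {M : Type*} [AddCommMonoid M] {p : ι → V} (hp : Function.Injective p) (F : (V → β) → M) :
    ∑ ξ : V → β, ∑ s : ι → β, F (Function.extend p s ξ) =
      Fintype.card (ι → β) • ∑ ζ : V → β, F ζ := by
  -- Exchanging the new values `s` with the old values `ξ ∘ p` is an involution.
  let swapValues : (V → β) × (ι → β) → (V → β) × (ι → β) := fun t =>
    (Function.extend p t.2 t.1, t.1 ∘ p)
  have hinv : Function.Involutive swapValues := by
    rintro ⟨ξ, s⟩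
    refine Prod.ext (funext fun a => ?_) (funext fun i => hp.extend_apply s ξ i)
    by_cases ha : ∃ k, p k = a
    · obtain ⟨k, rfl⟩ := ha
      exact hp.extend_apply _ _ k
    · exact (Function.extend_apply' _ _ _ ha).trans (Function.extend_apply' _ _ _ ha)
  calc ∑ ξ : V → β, ∑ s : ι → β, F (Function.extend p s ξ)
      = ∑ t, F (swapValues t).1 := by rw [Fintype.sum_prod_type]
    _ = ∑ t : (V → β) × (ι → β), F t.1 := hinv.bijective.sum_comp fun t => F t.1
    _ = Fintype.card (ι → β) • ∑ ζ : V → β, F ζ := by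
      rw [Fintype.sum_prod_type_right]
      simp only [sum_const, card_univ]

theorem sum_vecCons [Fintype β] {M : Type*} [AddCommMonoid M] {n : ℕ}
    (F : (Fin (n + 1) → β) → M) :
    ∑ s, F s = ∑ b : β, ∑ t : Fin n → β, F (Matrix.vecCons b t) :=
  ((Fin.consEquiv fun _ => β).sum_comp F).symm.trans (Fintype.sum_prod_type _)

end Resampling

section ExchangePairing

variable {V β : Type*} [Fintype V] [DecidableEq V] [Fintype β]

/-- The `ℓ²` inner product of the gradients of `f` along the exchanges of the sites `i, j` and of
the sites `k, l`. -/
def exchangePair (f : (V → β) → ℝ) (i j k l : V) : ℝ :=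
  ∑ ζ, (f ζ - f (ζ ∘ Equiv.swap i j)) * (f ζ - f (ζ ∘ Equiv.swap k l))

/-- The Dirichlet form of the exchange of the sites `i` and `j`, for the counting measure. -/
def exchangeEnergy (f : (V → β) → ℝ) (i j : V) : ℝ :=
  exchangePair f i j i j

variable (f : (V → β) → ℝ)

theorem exchangePair_swap_left (i j k l : V) : exchangePair f i j k l = exchangePair f j i k l := by
  simp only [exchangePair, Equiv.swap_comm i j]

theorem exchangePair_comm (i j k l : V) : exchangePair f i j k l = exchangePair f k l i j := by
  simp only [exchangePair, mul_comm]

theorem exchangePair_swap_right (i j k l : V) :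
    exchangePair f i j k l = exchangePair f i j l k := by
  rw [exchangePair_comm, exchangePair_swap_left, exchangePair_comm]

theorem exchangePair_self_left (i k l : V) : exchangePair f i i k l = 0 := by
  simp [exchangePair]

theorem exchangePair_self_right (i j k : V) : exchangePair f i j k k = 0 := by
  rw [exchangePair_comm, exchangePair_self_left]

theorem exchangeEnergy_comm (i j : V) : exchangeEnergy f i j = exchangeEnergy f j i :=
  (exchangePair_swap_left f i j i j).trans (exchangePair_swap_right f j i i j)

theorem exchangeEnergy_self (i : V) : exchangeEnergy f i i = 0 :=
  exchangePair_self_left f i i i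

theorem card_mul_exchangePair {ι : Type*} [Fintype ι] [DecidableEq ι] {p : ι → V}
    (hp : Function.Injective p) (i j k l : ι) :
    Fintype.card (ι → β) * exchangePair f (p i) (p j) (p k) (p l) =
      ∑ ξ : V → β, exchangePair (fun s => f (Function.extend p s ξ)) i j k l := by
  rw [exchangePair, ← nsmul_eq_mul, ← sum_sum_extend hp]
  simp only [exchangePair, extend_comp_swap hp]

end ExchangePairing

section FourPoint

variable {V R : Type*}

/-- A function of four points that is invariant under all permutations of its arguments, expressed
on the adjacent transpositions. -/
structure IsSymmetricFourPoint (Φ : V → V → V → V → R) : Prop where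
  swap₁₂ : ∀ i j k l, Φ j i k l = Φ i j k l
  swap₂₃ : ∀ i j k l, Φ i k j l = Φ i j k l
  swap₃₄ : ∀ i j k l, Φ i j l k = Φ i j k l

/-- The sum of a function of two pairs of points over the three perfect matchings of four
points. -/
def matchingSum [Add R] (P : V → V → V → V → R) (i j k l : V) : R :=
  P i j k l + P i k j l + P i l j k

/-- The restriction of a function of four points to distinct points, extended by zero. -/
def restrictDistinct [DecidableEq V] [Zero R] (P : V → V → V → V → R) (i j k l : V) : R :=
  if [i, j, k, l].Nodup then P i j k l else 0

theorem isSymmetricFourPoint_matchingSum [AddCommMonoid R] {P : V → V → V → V → R}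
    (hleft : ∀ i j k l, P i j k l = P j i k l) (hcomm : ∀ i j k l, P i j k l = P k l i j) :
    IsSymmetricFourPoint (matchingSum P) where
  swap₁₂ i j k l := by
    rw [matchingSum, matchingSum, hleft j i, hcomm j k, hcomm j l, add_right_comm]
  swap₂₃ i j k l := by
    rw [matchingSum, matchingSum, hcomm i l k, hleft k j, hcomm j k, add_comm (P i k j l)]
  swap₃₄ i j k l := by
    rw [matchingSum, matchingSum, hcomm i j l, hleft l k, hcomm k l, add_right_comm]

variable [DecidableEq V]

theorem IsSymmetricFourPoint.restrictDistinct [Zero R] {Φ : V → V → V → V → R}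
    (hΦ : IsSymmetricFourPoint Φ) : IsSymmetricFourPoint (restrictDistinct Φ) where
  swap₁₂ i j k l := if_congr (List.Perm.swap i j [k, l]).nodup_iff (hΦ.swap₁₂ i j k l) rfl
  swap₂₃ i j k l := if_congr ((List.Perm.swap j k [l]).cons i).nodup_iff (hΦ.swap₂₃ i j k l) rfl
  swap₃₄ i j k l :=
    if_congr (((List.Perm.swap k l []).cons j).cons i).nodup_iff (hΦ.swap₃₄ i j k l) rfl

theorem restrictDistinct_of_nodup [Zero R] (P : V → V → V → V → R) {i j k l : V}
    (h : [i, j, k, l].Nodup) : restrictDistinct P i j k l = P i j k l :=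
  if_pos h

theorem restrictDistinct_of_not_nodup [Zero R] (P : V → V → V → V → R) {i j k l : V}
    (h : ¬[i, j, k, l].Nodup) : restrictDistinct P i j k l = 0 :=
  if_neg h

theorem matchingSum_restrictDistinct [AddMonoid R] (P : V → V → V → V → R) :
    matchingSum (restrictDistinct P) = restrictDistinct (matchingSum P) := by
  funext i j k l
  have hikjl : [i, k, j, l].Nodup ↔ [i, j, k, l].Nodup :=
    ((List.Perm.swap j k [l]).cons i).nodup_iff
  have hiljk : [i, l, j, k].Nodup ↔ [i, j, k, l].Nodup :=
    ((List.perm_append_comm (l₁ := [l]) (l₂ := [j, k])).cons i).nodup_iff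
  simp only [matchingSum, restrictDistinct, hikjl, hiljk]
  split_ifs
  exacts [rfl, by simp only [add_zero]]

end FourPoint

section TwoValuedConfigurations

theorem exchangePair_fin_three (g : (Fin 3 → Bool) → ℝ) :
    4 * exchangePair g 0 1 0 2 =
      exchangeEnergy g 0 1 + exchangeEnergy g 0 2 - exchangeEnergy g 1 2 := by
  have hswap : ∀ a b c : Bool,
      ![a, b, c] ∘ Equiv.swap (0 : Fin 3) 1 = ![b, a, c] ∧
      ![a, b, c] ∘ Equiv.swap (0 : Fin 3) 2 = ![c, b, a] ∧
      ![a, b, c] ∘ Equiv.swap (1 : Fin 3) 2 = ![a, c, b] := by decide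
  simp only [exchangeEnergy, exchangePair, sum_vecCons, Fintype.sum_bool, Fintype.sum_unique,
    Matrix.empty_eq default, hswap]
  ring

theorem exchangePair_fin_four (g : (Fin 4 → Bool) → ℝ) :
    exchangePair g 0 1 2 3 =
      (g ![true, false, true, false] - g ![false, true, true, false] -
        g ![true, false, false, true] + g ![false, true, false, true]) ^ 2 := by
  have hswap : ∀ a b c d : Bool,
      ![a, b, c, d] ∘ Equiv.swap (0 : Fin 4) 1 = ![b, a, c, d] ∧
      ![a, b, c, d] ∘ Equiv.swap (2 : Fin 4) 3 = ![a, b, d, c] := by decide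
  simp only [exchangePair, sum_vecCons, Fintype.sum_bool, Fintype.sum_unique,
    Matrix.empty_eq default, hswap]
  ring

/-- The configuration on five sites that equals `b` exactly at `i` and `j`. -/
def pairConfig (b : Bool) (i j : Fin 5) (v : Fin 5) : Bool :=
  if v = i ∨ v = j then b else !b

/-- Six times the value at `{0, i}` of the orthogonal projection of the function
`{v, w} ↦ g (pairConfig b v w)` of unordered pairs onto the functions whose sum over the pairs
containing any given site vanishes. Here `j, k, l` are the sites other than `0` and `i`. -/
def pairProjection (g : (Fin 5 → Bool) → ℝ) (b : Bool) (i j k l : Fin 5) : ℝ :=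
  3 * g (pairConfig b 0 i)
    - (g (pairConfig b 0 j) + g (pairConfig b 0 k) + g (pairConfig b 0 l))
    - (g (pairConfig b i j) + g (pairConfig b i k) + g (pairConfig b i l))
    + (g (pairConfig b j k) + g (pairConfig b j l) + g (pairConfig b k l))

theorem matchingSum_fin_five (g : (Fin 5 → Bool) → ℝ) :
    matchingSum (exchangePair g) 0 2 3 4 + matchingSum (exchangePair g) 0 1 3 4 +
        matchingSum (exchangePair g) 0 1 2 4 + matchingSum (exchangePair g) 0 1 2 3 -
        matchingSum (exchangePair g) 1 2 3 4 =
      1 / 2 * ∑ b : Bool, (pairProjection g b 1 2 3 4 ^ 2 + pairProjection g b 2 1 3 4 ^ 2 +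
        pairProjection g b 3 1 2 4 ^ 2 + pairProjection g b 4 1 2 3 ^ 2) := by
  have hswap : ∀ a b c d e : Bool,
      ![a, b, c, d, e] ∘ Equiv.swap (0 : Fin 5) 1 = ![b, a, c, d, e] ∧
      ![a, b, c, d, e] ∘ Equiv.swap (0 : Fin 5) 2 = ![c, b, a, d, e] ∧
      ![a, b, c, d, e] ∘ Equiv.swap (0 : Fin 5) 3 = ![d, b, c, a, e] ∧
      ![a, b, c, d, e] ∘ Equiv.swap (0 : Fin 5) 4 = ![e, b, c, d, a] ∧
      ![a, b, c, d, e] ∘ Equiv.swap (1 : Fin 5) 2 = ![a, c, b, d, e] ∧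
      ![a, b, c, d, e] ∘ Equiv.swap (1 : Fin 5) 3 = ![a, d, c, b, e] ∧
      ![a, b, c, d, e] ∘ Equiv.swap (1 : Fin 5) 4 = ![a, e, c, d, b] ∧
      ![a, b, c, d, e] ∘ Equiv.swap (2 : Fin 5) 3 = ![a, b, d, c, e] ∧
      ![a, b, c, d, e] ∘ Equiv.swap (2 : Fin 5) 4 = ![a, b, e, d, c] ∧
      ![a, b, c, d, e] ∘ Equiv.swap (3 : Fin 5) 4 = ![a, b, c, e, d] := by decide
  have hpair : ∀ b : Bool,
      pairConfig b 0 1 = ![b, b, !b, !b, !b] ∧ pairConfig b 0 2 = ![b, !b, b, !b, !b] ∧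
      pairConfig b 0 3 = ![b, !b, !b, b, !b] ∧ pairConfig b 0 4 = ![b, !b, !b, !b, b] ∧
      pairConfig b 1 2 = ![!b, b, b, !b, !b] ∧ pairConfig b 1 3 = ![!b, b, !b, b, !b] ∧
      pairConfig b 1 4 = ![!b, b, !b, !b, b] ∧ pairConfig b 2 3 = ![!b, !b, b, b, !b] ∧
      pairConfig b 2 4 = ![!b, !b, b, !b, b] ∧ pairConfig b 3 4 = ![!b, !b, !b, b, b] := by
    decide
  have hpair_comm : ∀ b : Bool,
      pairConfig b 2 1 = pairConfig b 1 2 ∧ pairConfig b 3 1 = pairConfig b 1 3 ∧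
      pairConfig b 4 1 = pairConfig b 1 4 ∧ pairConfig b 3 2 = pairConfig b 2 3 ∧
      pairConfig b 4 2 = pairConfig b 2 4 ∧ pairConfig b 4 3 = pairConfig b 3 4 := by decide
  simp only [matchingSum, exchangePair, pairProjection, sum_vecCons, Fintype.sum_bool,
    Fintype.sum_unique, Matrix.empty_eq default, hswap, hpair, hpair_comm, Bool.not_true,
    Bool.not_false]
  ring

variable {V : Type*} [Fintype V] [DecidableEq V] (f : (V → Bool) → ℝ)

theorem exchangePair_of_injective {p : Fin 3 → V} (hp : Function.Injective p) :
    4 * exchangePair f (p 0) (p 1) (p 0) (p 2) =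
      exchangeEnergy f (p 0) (p 1) + exchangeEnergy f (p 0) (p 2) -
        exchangeEnergy f (p 1) (p 2) := by
  have hcard : (Fintype.card (Fin 3 → Bool) : ℝ) ≠ 0 := Nat.cast_ne_zero.2 Fintype.card_ne_zero
  refine mul_left_cancel₀ hcard ?_
  rw [mul_left_comm]
  simp only [exchangeEnergy, mul_add, mul_sub, card_mul_exchangePair f hp, mul_sum,
    ← sum_add_distrib, ← sum_sub_distrib]
  exact sum_congr rfl fun ξ _ => exchangePair_fin_three _

theorem exchangePair_nonneg_of_injective {p : Fin 4 → V} (hp : Function.Injective p) :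
    0 ≤ exchangePair f (p 0) (p 1) (p 2) (p 3) := by
  have hcard : (0 : ℝ) < Fintype.card (Fin 4 → Bool) := Nat.cast_pos.2 Fintype.card_pos
  refine nonneg_of_mul_nonneg_right ?_ hcard
  rw [card_mul_exchangePair f hp]
  exact sum_nonneg fun ξ _ => (exchangePair_fin_four _).symm ▸ sq_nonneg _

theorem matchingSum_le_of_injective {p : Fin 5 → V} (hp : Function.Injective p) :
    matchingSum (exchangePair f) (p 1) (p 2) (p 3) (p 4) ≤
      matchingSum (exchangePair f) (p 0) (p 2) (p 3) (p 4) +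
        matchingSum (exchangePair f) (p 0) (p 1) (p 3) (p 4) +
        matchingSum (exchangePair f) (p 0) (p 1) (p 2) (p 4) +
        matchingSum (exchangePair f) (p 0) (p 1) (p 2) (p 3) := by
  have hcard : (0 : ℝ) < Fintype.card (Fin 5 → Bool) := Nat.cast_pos.2 Fintype.card_pos
  refine le_of_mul_le_mul_left ?_ hcard
  simp only [matchingSum, mul_add, card_mul_exchangePair f hp, ← sum_add_distrib]
  refine sum_le_sum fun ξ _ => sub_nonneg.1 ?_
  exact (matchingSum_fin_five _).symm ▸ by positivity

end TwoValuedConfigurations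

section WeightedSums

variable {V R : Type*} [Fintype V] [CommRing R]

/-- The integral of `F` against the signed measure on `V` with weights `q`. -/
def wsum (q F : V → R) : R :=
  ∑ i, q i * F i

/-- The quadratic form in the weights `q` with coefficients `D`. -/
def quadraticSum (q : V → R) (D : V → V → R) : R :=
  wsum q fun i => wsum q fun j => D i j

/-- The cubic form in the weights `q` with coefficients `F`. -/
def cubicSum (q : V → R) (F : V → V → V → R) : R :=
  wsum q fun i => quadraticSum q fun j k => F i j k

/-- The quartic form in the weights `q` with coefficients `F`. -/
def quarticSum (q : V → R) (F : V → V → V → V → R) : R :=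
  wsum q fun i => cubicSum q fun j k l => F i j k l

variable (q : V → R)

theorem wsum_add (F G : V → R) : wsum q (fun i => F i + G i) = wsum q F + wsum q G := by
  simp only [wsum, mul_add, sum_add_distrib]

theorem wsum_sub (F G : V → R) : wsum q (fun i => F i - G i) = wsum q F - wsum q G := by
  simp only [wsum, mul_sub, sum_sub_distrib]

theorem wsum_const_mul (a : R) (F : V → R) : wsum q (fun i => a * F i) = a * wsum q F := by
  simp only [wsum, mul_sum, mul_left_comm]

theorem wsum_mul_const (a : R) (F : V → R) : wsum q (fun i => F i * a) = wsum q F * a := by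
  simp only [wsum, sum_mul, mul_assoc]

theorem wsum_const (a : R) : wsum q (fun _ => a) = (∑ i, q i) * a := by
  simp only [wsum, sum_mul]

theorem wsum_ite_eq [DecidableEq V] (j : V) (F : V → R) :
    wsum q (fun i => if j = i then F i else 0) = q j * F j := by
  simp only [wsum, mul_ite, mul_zero, sum_ite_eq, mem_univ, if_true]

theorem wsum_ite_const (P : Prop) [Decidable P] (F : V → R) :
    wsum q (fun i => if P then F i else 0) = if P then wsum q F else 0 := by
  split_ifs
  exacts [rfl, by simp only [wsum, mul_zero, sum_const_zero]]

theorem quarticSum_ite_eq [DecidableEq V] (F : V → V → V → R) :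
    quarticSum q (fun i j k l => if i = k then F i j l else 0) =
      wsum q fun i => q i * quadraticSum q (F i) := by
  simp only [quarticSum, cubicSum, quadraticSum, wsum_ite_const, wsum_ite_eq, wsum_const_mul]

theorem wsum_sum {ι : Type*} (s : Finset ι) (F : V → ι → R) :
    wsum q (fun i => ∑ a ∈ s, F i a) = ∑ a ∈ s, wsum q (fun i => F i a) := by
  simp only [wsum, mul_sum]
  exact sum_comm

theorem quadraticSum_flip (D : V → V → R) :
    quadraticSum q (fun i j => D j i) = quadraticSum q D := by
  simp only [quadraticSum, wsum, mul_sum]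
  rw [sum_comm]
  simp only [mul_left_comm]

theorem quadraticSum_eq_sum (D : V → V → R) :
    quadraticSum q D = ∑ i, ∑ j, q i * q j * D i j := by
  simp only [quadraticSum, wsum, mul_sum, mul_assoc]

variable {q} in
theorem quadraticSum_sub_sq (hq : ∑ i, q i = 0) (h : V → R) :
    quadraticSum q (fun i j => (h i - h j) ^ 2) = -2 * wsum q h ^ 2 := by
  simp only [quadraticSum, sub_sq, wsum_add, wsum_sub, wsum_const, wsum_const_mul, wsum_mul_const,
    mul_assoc, hq, zero_mul]
  ring

theorem quarticSum_swap₁₂ (F : V → V → V → V → R) :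
    quarticSum q (fun i j k l => F j i k l) = quarticSum q F :=
  quadraticSum_flip q fun i j => quadraticSum q (F i j)

theorem quarticSum_swap₂₃ (F : V → V → V → V → R) :
    quarticSum q (fun i j k l => F i k j l) = quarticSum q F :=
  congrArg (wsum q) (funext fun i => quadraticSum_flip q fun j k => wsum q (F i j k))

theorem quarticSum_swap₃₄ (F : V → V → V → V → R) :
    quarticSum q (fun i j k l => F i j l k) = quarticSum q F :=
  congrArg (wsum q) (funext fun i => congrArg (wsum q) (funext fun j =>
    quadraticSum_flip q (F i j)))

theorem quarticSum_matchingSum (P : V → V → V → V → R) :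
    quarticSum q (matchingSum P) = 3 * quarticSum q P := by
  have hadd : quarticSum q (matchingSum P) = quarticSum q P +
      quarticSum q (fun i j k l => P i k j l) + quarticSum q (fun i j k l => P i l j k) := by
    simp only [quarticSum, cubicSum, quadraticSum, matchingSum, wsum_add]
  have hrotate : quarticSum q (fun i j k l => P i l j k) = quarticSum q P :=
    (quarticSum_swap₃₄ q fun i j k l => P i k j l).trans (quarticSum_swap₂₃ q P)
  rw [hadd, hrotate, quarticSum_swap₂₃]
  ring

theorem quarticSum_mul (a : V → V → R) :
    quarticSum q (fun i j k l => a i j * a k l) = quadraticSum q a ^ 2 := by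
  simp only [quarticSum, cubicSum, quadraticSum, wsum_const_mul, wsum_mul_const, sq]

variable [DecidableEq V]

theorem wsum_eq_update_add (o : V) (F : V → R) :
    wsum q F = wsum (Function.update q o 0) F + q o * F o := by
  simp only [wsum, Function.update_apply, ite_mul, zero_mul, sum_ite, sum_const_zero, zero_add]
  rw [filter_ne', sum_erase_add _ _ (mem_univ o)]

variable {q} in
theorem sum_update_zero (hq : ∑ i, q i = 0) (o : V) : ∑ i, Function.update q o 0 i = -q o := by
  rw [sum_update_of_mem (mem_univ o), zero_add, ← erase_eq, ← add_eq_zero_iff_eq_neg,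
    sum_erase_add _ _ (mem_univ o), hq]

theorem quarticSum_eq_update_add {Φ : V → V → V → V → R} (hΦ : IsSymmetricFourPoint Φ) {o : V}
    (ho : ∀ k l, Φ o o k l = 0) :
    quarticSum q Φ = quarticSum (Function.update q o 0) Φ +
      4 * (q o * cubicSum (Function.update q o 0) (Φ o)) := by
  have h₁ : ∀ k, Φ o o k = fun _ => 0 := fun k => funext (ho k)
  have h₂ : ∀ i, Φ i o = Φ o i := fun i => funext₂ (hΦ.swap₁₂ o i)
  have h₃ : ∀ i j, Φ i j o = Φ o i j := fun i j =>
    funext fun l => (hΦ.swap₂₃ i o j l).trans (congrFun₂ (h₂ i) j l)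
  have h₄ : ∀ i j k, Φ i j k o = Φ o i j k := fun i j k =>
    (hΦ.swap₃₄ i j o k).trans (congrFun (h₃ i j) k)
  simp only [quarticSum, cubicSum, quadraticSum, wsum_eq_update_add q o, wsum_add, wsum_const_mul,
    h₁, h₂, h₃, h₄]
  simp only [wsum_const, mul_zero, add_zero]
  ring

end WeightedSums

section ConditionallyNegative

variable {V : Type*} [Fintype V]

theorem wsum_le_wsum {q F G : V → ℝ} (hq : ∀ i, 0 ≤ q i) (h : ∀ i, q i ≠ 0 → F i ≤ G i) :
    wsum q F ≤ wsum q G := by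
  refine sum_le_sum fun i _ => ?_
  by_cases hi : q i = 0
  · rw [hi, zero_mul, zero_mul]
  · exact mul_le_mul_of_nonneg_left (h i hi) (hq i)

theorem quarticSum_nonpos {Φ : V → V → V → V → ℝ} (hΦ : IsSymmetricFourPoint Φ)
    {o : V} (ho : ∀ k l, Φ o o k l = 0)
    (hfive : ∀ m j k l, m ≠ o → j ≠ o → k ≠ o → l ≠ o →
      Φ m j k l ≤ Φ o j k l + Φ o m k l + Φ o m j l + Φ o m j k)
    {q : V → ℝ} (hq : ∑ i, q i = 0) (hpos : ∀ i, i ≠ o → 0 ≤ q i) :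
    quarticSum q Φ ≤ 0 := by
  classical
  set c := Function.update q o 0 with hc
  have hc_nonneg : ∀ i, 0 ≤ c i := by
    intro i
    rw [hc, Function.update_apply]
    split_ifs with hi
    exacts [le_rfl, hpos i hi]
  have hne : ∀ {i}, c i ≠ 0 → i ≠ o := fun hi h => hi (by rw [h, hc, Function.update_self])
  have hle : quarticSum c Φ ≤
      quarticSum c fun m j k l => Φ o j k l + Φ o m k l + Φ o m j l + Φ o m j k :=
    wsum_le_wsum hc_nonneg fun m hm => wsum_le_wsum hc_nonneg fun j hj =>
      wsum_le_wsum hc_nonneg fun k hk => wsum_le_wsum hc_nonneg fun l hl =>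
        hfive m j k l (hne hm) (hne hj) (hne hk) (hne hl)
  have hsum : (quarticSum c fun m j k l => Φ o j k l + Φ o m k l + Φ o m j l + Φ o m j k) =
      4 * (-q o * cubicSum c (Φ o)) := by
    simp only [quarticSum, cubicSum, quadraticSum, wsum_add, wsum_const, wsum_const_mul, hc,
      sum_update_zero hq]
    ring
  rw [quarticSum_eq_update_add q hΦ ho]
  linarith

end ConditionallyNegative

section Octopus

variable {V : Type*}

/-- Half of `D i j + D i l - D j l`, for a kernel `D` in the role of a squared distance: the inner
product of the displacements from `i` to `j` and from `i` to `l`. -/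
def gromovProduct (D : V → V → ℝ) (i j l : V) : ℝ :=
  (D i j + D i l - D j l) / 2

theorem gromovProduct_self_left {D : V → V → ℝ} (hself : ∀ i, D i i = 0) (i l : V) :
    gromovProduct D i i l = 0 := by
  rw [gromovProduct, hself, zero_add, sub_self, zero_div]

theorem gromovProduct_self_right {D : V → V → ℝ} (hsymm : ∀ i j, D i j = D j i)
    (hself : ∀ i, D i i = 0) (i j : V) : gromovProduct D i j i = 0 := by
  rw [gromovProduct, hself, add_zero, hsymm i j, sub_self, zero_div]

theorem gromovProduct_self {D : V → V → ℝ} (hself : ∀ i, D i i = 0) (i j : V) :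
    gromovProduct D i j j = D i j := by
  rw [gromovProduct, hself, sub_zero, add_self_div_two]

variable [Fintype V]

theorem quadraticSum_gromovProduct {q : V → ℝ} (hq : ∑ i, q i = 0) (D : V → V → ℝ) (i : V) :
    quadraticSum q (gromovProduct D i) = -(1 / 2) * quadraticSum q D := by
  simp only [quadraticSum, gromovProduct, div_eq_mul_inv, wsum_mul_const, wsum_sub, wsum_add,
    wsum_const, hq, zero_mul]
  ring

/-- A symmetric kernel vanishing on the diagonal that satisfies the octopus inequality: its
quadratic form is nonpositive on the weights of total mass zero with a single negative entry. -/
structure IsOctopusKernel (D : V → V → ℝ) : Prop where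
  symm : ∀ i j, D i j = D j i
  self : ∀ i, D i i = 0
  quadraticSum_nonpos : ∀ (o : V) (q : V → ℝ), ∑ i, q i = 0 → (∀ i, i ≠ o → 0 ≤ q i) →
    quadraticSum q D ≤ 0

theorem IsOctopusKernel.nonneg {D : V → V → ℝ} (hD : IsOctopusKernel D) (i o : V) :
    0 ≤ D i o := by
  classical
  let q : V → ℝ := Pi.single i 1 - Pi.single o 1
  have hwsum : ∀ F : V → ℝ, wsum q F = F i - F o := fun F => by
    simp only [q, wsum, Pi.sub_apply, sub_mul, sum_sub_distrib, Pi.single_apply, ite_mul, one_mul,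
      zero_mul, sum_ite_eq', mem_univ, if_true]
  have hmass : ∑ j, q j = 0 := by
    simp only [q, Pi.sub_apply, sum_sub_distrib, sum_pi_single', mem_univ, if_true, sub_self]
  have hpos : ∀ j, j ≠ o → 0 ≤ q j := fun j hj => by
    simp only [q, Pi.sub_apply, Pi.single_eq_of_ne hj, sub_zero, Pi.single_apply]
    positivity
  have hle := hD.quadraticSum_nonpos o q hmass hpos
  rw [quadraticSum, hwsum, hwsum, hwsum, hD.self, hD.self, hD.symm o i] at hle
  linarith

variable [DecidableEq V] (f : (V → Bool) → ℝ)

theorem exchangePair_of_shared_site (i j l : V) :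
    exchangePair f i j i l = 1 / 2 * (gromovProduct (exchangeEnergy f) i j l +
      if j = l then gromovProduct (exchangeEnergy f) j i i else 0) := by
  have hself := exchangeEnergy_self f
  have hcomm := exchangeEnergy_comm f
  have hleft := gromovProduct_self_left hself
  have hright := gromovProduct_self_right hcomm hself
  by_cases h : [i, j, l].Nodup
  · have hthree := exchangePair_of_injective f (List.nodup_iff_injective_get.1 h)
    have hjl : j ≠ l := by grind
    rw [if_neg hjl, gromovProduct]
    simp only [List.get] at hthree
    linarith
  · obtain rfl | rfl | rfl : i = j ∨ i = l ∨ j = l := by grind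
    · simp [exchangePair_self_left, hleft]
    · grind [exchangePair_self_right]
    · rw [if_pos rfl, gromovProduct_self hself, gromovProduct_self hself, hcomm j i,
        exchangeEnergy]
      ring

theorem exchangePair_eq_restrictDistinct_add (i j k l : V) :
    exchangePair f i j k l = restrictDistinct (exchangePair f) i j k l + 1 / 2 *
      ((if i = k then gromovProduct (exchangeEnergy f) i j l else 0) +
        (if i = l then gromovProduct (exchangeEnergy f) i j k else 0) +
        (if j = k then gromovProduct (exchangeEnergy f) j i l else 0) +
        (if j = l then gromovProduct (exchangeEnergy f) j i k else 0)) := by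
  have hleft := gromovProduct_self_left (exchangeEnergy_self f)
  have hright := gromovProduct_self_right (exchangeEnergy_comm f) (exchangeEnergy_self f)
  by_cases h : [i, j, k, l].Nodup
  · have hne : i ≠ k ∧ i ≠ l ∧ j ≠ k ∧ j ≠ l := by grind
    simp only [restrictDistinct_of_nodup _ h, hne, if_false, add_zero, mul_zero]
  rw [restrictDistinct_of_not_nodup _ h, zero_add]
  obtain rfl | rfl | rfl | rfl | rfl | rfl :
      i = j ∨ k = l ∨ i = k ∨ i = l ∨ j = k ∨ j = l := by grind
  · simp [exchangePair_self_left, hleft]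
  · grind [exchangePair_self_right]
  · grind [exchangePair_of_shared_site]
  · grind [exchangePair_of_shared_site, exchangePair_swap_right]
  · grind [exchangePair_of_shared_site, exchangePair_swap_left]
  · grind [exchangePair_of_shared_site, exchangePair_swap_left, exchangePair_swap_right]

variable {q : V → ℝ}

theorem quarticSum_exchangePair (hq : ∑ i, q i = 0) :
    quarticSum q (exchangePair f) = quarticSum q (restrictDistinct (exchangePair f)) -
      (∑ i, q i * q i) * quadraticSum q (exchangeEnergy f) := by
  set G := gromovProduct (exchangeEnergy f)
  have hik : (quarticSum q fun i j k l => if i = k then G i j l else 0) =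
      (∑ i, q i * q i) * (-(1 / 2) * quadraticSum q (exchangeEnergy f)) := by
    simp only [quarticSum_ite_eq, G, quadraticSum_gromovProduct hq, wsum_mul_const]
    rfl
  have hil : (quarticSum q fun i j k l => if i = l then G i j k else 0) =
      (∑ i, q i * q i) * (-(1 / 2) * quadraticSum q (exchangeEnergy f)) :=
    (quarticSum_swap₃₄ q fun i j k l => if i = k then G i j l else 0).trans hik
  have hjk : (quarticSum q fun i j k l => if j = k then G j i l else 0) =
      (∑ i, q i * q i) * (-(1 / 2) * quadraticSum q (exchangeEnergy f)) :=
    (quarticSum_swap₁₂ q fun i j k l => if i = k then G i j l else 0).trans hik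
  have hjl : (quarticSum q fun i j k l => if j = l then G j i k else 0) =
      (∑ i, q i * q i) * (-(1 / 2) * quadraticSum q (exchangeEnergy f)) :=
    (quarticSum_swap₁₂ q fun i j k l => if i = l then G i j k else 0).trans hil
  have hsplit : quarticSum q (exchangePair f) =
      quarticSum q (restrictDistinct (exchangePair f)) + 1 / 2 *
        ((quarticSum q fun i j k l => if i = k then G i j l else 0) +
          (quarticSum q fun i j k l => if i = l then G i j k else 0) +
          (quarticSum q fun i j k l => if j = k then G j i l else 0) +
          (quarticSum q fun i j k l => if j = l then G j i k else 0)) := by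
    simp only [quarticSum, cubicSum, quadraticSum, ← wsum_add, ← wsum_const_mul, G,
      ← exchangePair_eq_restrictDistinct_add]
  rw [hsplit, hik, hil, hjk, hjl]
  ring

theorem quarticSum_exchangePair_nonneg (q : V → ℝ) : 0 ≤ quarticSum q (exchangePair f) := by
  have hsq : quarticSum q (exchangePair f) =
      ∑ ζ, quadraticSum q (fun i j => f ζ - f (ζ ∘ Equiv.swap i j)) ^ 2 := by
    simp only [← quarticSum_mul]
    simp only [quarticSum, cubicSum, quadraticSum, exchangePair, wsum_sum]
  rw [hsq]
  exact sum_nonneg fun ζ _ => sq_nonneg _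

theorem restrictDistinct_matchingSum_exchangePair_nonneg (i j k l : V) :
    0 ≤ restrictDistinct (matchingSum (exchangePair f)) i j k l := by
  rw [← matchingSum_restrictDistinct]
  have hpair : ∀ i j k l, 0 ≤ restrictDistinct (exchangePair f) i j k l := by
    intro i j k l
    by_cases h : [i, j, k, l].Nodup
    · rw [restrictDistinct_of_nodup _ h]
      exact exchangePair_nonneg_of_injective f (List.nodup_iff_injective_get.1 h)
    · rw [restrictDistinct_of_not_nodup _ h]
  exact add_nonneg (add_nonneg (hpair ..) (hpair ..)) (hpair ..)

theorem restrictDistinct_matchingSum_le {o m j k l : V} (hm : m ≠ o) (hj : j ≠ o) (hk : k ≠ o)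
    (hl : l ≠ o) :
    restrictDistinct (matchingSum (exchangePair f)) m j k l ≤
      restrictDistinct (matchingSum (exchangePair f)) o j k l +
        restrictDistinct (matchingSum (exchangePair f)) o m k l +
        restrictDistinct (matchingSum (exchangePair f)) o m j l +
        restrictDistinct (matchingSum (exchangePair f)) o m j k := by
  by_cases h : [m, j, k, l].Nodup
  · have hnodup : [o, m, j, k, l].Nodup := by grind
    have hfive := matchingSum_le_of_injective f (List.nodup_iff_injective_get.1 hnodup)
    rw [restrictDistinct_of_nodup _ h, restrictDistinct_of_nodup _ (by grind),
      restrictDistinct_of_nodup _ (by grind), restrictDistinct_of_nodup _ (by grind),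
      restrictDistinct_of_nodup _ (by grind)]
    exact hfive
  · have hnonneg := restrictDistinct_matchingSum_exchangePair_nonneg f o
    rw [restrictDistinct_of_not_nodup _ h]
    exact add_nonneg (add_nonneg (add_nonneg (hnonneg ..) (hnonneg ..)) (hnonneg ..)) (hnonneg ..)

theorem quarticSum_restrictDistinct_exchangePair_nonpos {o : V} (hq : ∑ i, q i = 0)
    (hpos : ∀ i, i ≠ o → 0 ≤ q i) : quarticSum q (restrictDistinct (exchangePair f)) ≤ 0 := by
  have hΦ : IsSymmetricFourPoint (restrictDistinct (matchingSum (exchangePair f))) :=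
    (isSymmetricFourPoint_matchingSum (exchangePair_swap_left f)
      (exchangePair_comm f)).restrictDistinct
  have hle : quarticSum q (restrictDistinct (matchingSum (exchangePair f))) ≤ 0 :=
    quarticSum_nonpos hΦ (fun k l => restrictDistinct_of_not_nodup _ (by grind))
      (fun m j k l => restrictDistinct_matchingSum_le f) hq hpos
  rw [← matchingSum_restrictDistinct, quarticSum_matchingSum] at hle
  linarith

theorem isOctopusKernel_exchangeEnergy : IsOctopusKernel (exchangeEnergy f) where
  symm := exchangeEnergy_comm f
  self := exchangeEnergy_self f
  quadraticSum_nonpos o q hq hpos := by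
    have hmul : (∑ i, q i * q i) * quadraticSum q (exchangeEnergy f) ≤ 0 := by
      have hnonneg := quarticSum_exchangePair_nonneg f q
      have hnonpos := quarticSum_restrictDistinct_exchangePair_nonpos f hq hpos
      rw [quarticSum_exchangePair f hq] at hnonneg
      linarith
    obtain hzero | hsq := (sum_nonneg fun i _ => mul_self_nonneg (q i)).eq_or_lt'
    · have hq_zero : ∀ i, q i = 0 := fun i => mul_self_eq_zero.1
        ((sum_eq_zero_iff_of_nonneg fun i _ => mul_self_nonneg (q i)).1 hzero i (mem_univ i))
      simp only [quadraticSum, wsum, hq_zero, zero_mul, sum_const_zero, le_refl]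
    · exact nonpos_of_mul_nonpos_right hmul hsq

end Octopus

section Network

variable {V : Type*} [Fintype V]

/-- The total energy of a kernel `D` over the unordered pairs of sites with conductances `c`; each
pair occurs twice in the double sum. Taking `D z w = (h z - h w) ^ 2` gives `elEnergy c h`. -/
def pairEnergy (c D : V → V → ℝ) : ℝ :=
  (1 / 2) * ∑ z, ∑ w, c z w * D z w

section EffectiveConductance

variable {c : V → V → ℝ} {x y : V}

theorem elEnergy_nonneg (hnn : ∀ z w, 0 ≤ c z w) (h : V → ℝ) : 0 ≤ elEnergy c h :=
  mul_nonneg one_half_pos.le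
    (sum_nonneg fun _ _ => sum_nonneg fun _ _ => mul_nonneg (hnn _ _) (sq_nonneg _))

theorem ceff_le_elEnergy (hnn : ∀ z w, 0 ≤ c z w) {h : V → ℝ} (hx : h x = 1) (hy : h y = 0) :
    ceff c x y ≤ elEnergy c h :=
  csInf_le ⟨0, by rintro _ ⟨g, -, -, rfl⟩; exact elEnergy_nonneg hnn g⟩ ⟨h, hx, hy, rfl⟩

theorem le_ceff (hxy : x ≠ y) {a : ℝ}
    (ha : ∀ h : V → ℝ, h x = 1 → h y = 0 → a ≤ elEnergy c h) : a ≤ ceff c x y := by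
  classical
  refine le_csInf ⟨_, Pi.single x 1, Pi.single_eq_same x 1, Pi.single_eq_of_ne' hxy 1, rfl⟩ ?_
  rintro _ ⟨h, hx, hy, rfl⟩
  exact ha h hx hy

theorem mul_sq_sub_le_elEnergy (hnn : ∀ z w, 0 ≤ c z w) (h : V → ℝ) (u v : V) :
    1 / 2 * (c u v * (h u - h v) ^ 2) ≤ elEnergy c h := by
  have hterm : ∀ z w, 0 ≤ c z w * (h z - h w) ^ 2 := fun z w =>
    mul_nonneg (hnn z w) (sq_nonneg _)
  refine mul_le_mul_of_nonneg_left ?_ one_half_pos.le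
  exact (single_le_sum (fun w _ => hterm u w) (mem_univ v)).trans
    (single_le_sum (f := fun z => ∑ w, c z w * (h z - h w) ^ 2)
      (fun z _ => sum_nonneg fun w _ => hterm z w) (mem_univ u))

theorem exists_sq_sub_le_mul_elEnergy (hnn : ∀ z w, 0 ≤ c z w) (hsymm : ∀ z w, c z w = c w z)
    (hreach : (SimpleGraph.fromRel fun z w => 0 < c z w).Reachable x y) :
    ∃ K : ℝ, ∀ h : V → ℝ, (h x - h y) ^ 2 ≤ K * elEnergy c h := by
  obtain ⟨p⟩ := hreach
  induction p with
  | nil => exact ⟨0, fun h => by simp⟩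
  | @cons u v w hadj _ ih =>
    obtain ⟨K, hK⟩ := ih
    have hc : 0 < c u v := by
      rcases (SimpleGraph.fromRel_adj _ _ _).1 hadj with ⟨-, h | h⟩
      exacts [h, hsymm u v ▸ h]
    refine ⟨2 * (2 / c u v) + 2 * K, fun h => ?_⟩
    have hedge : (h u - h v) ^ 2 ≤ 2 / c u v * elEnergy c h := by
      rw [div_mul_eq_mul_div, le_div_iff₀ hc]
      linarith [mul_sq_sub_le_elEnergy hnn h u v]
    calc (h u - h w) ^ 2 = ((h u - h v) + (h v - h w)) ^ 2 := by rw [sub_add_sub_cancel]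
      _ ≤ 2 * ((h u - h v) ^ 2 + (h v - h w) ^ 2) := add_sq_le
      _ ≤ 2 * (2 / c u v * elEnergy c h + K * elEnergy c h) := by gcongr; exact hK h
      _ = (2 * (2 / c u v) + 2 * K) * elEnergy c h := by ring

theorem ceff_pos (hnn : ∀ z w, 0 ≤ c z w) (hsymm : ∀ z w, c z w = c w z) (hxy : x ≠ y)
    (hreach : (SimpleGraph.fromRel fun z w => 0 < c z w).Reachable x y) : 0 < ceff c x y := by
  obtain ⟨K, hK⟩ := exists_sq_sub_le_mul_elEnergy hnn hsymm hreach
  have hmax : 0 < max K 1 := lt_max_of_lt_right one_pos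
  refine (one_div_pos.2 hmax).trans_le (le_ceff hxy fun h hx hy => ?_)
  rw [div_le_iff₀' hmax]
  calc (1 : ℝ) = (h x - h y) ^ 2 := by rw [hx, hy, sub_zero, one_pow]
    _ ≤ K * elEnergy c h := hK h
    _ ≤ max K 1 * elEnergy c h :=
      mul_le_mul_of_nonneg_right (le_max_left K 1) (elEnergy_nonneg hnn h)

theorem pairEnergy_eq_of_support_pair (hsymm : ∀ z w, c z w = c w z) (hxy : x ≠ y)
    (hsupp : ∀ z w, z ≠ x → z ≠ y → c z w = 0) {D : V → V → ℝ} (hD : ∀ z w, D z w = D w z)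
    (hself : ∀ z, D z z = 0) : pairEnergy c D = c x y * D x y := by
  have hinner : ∀ z, ∑ w, c z w * D z w = c z x * D z x + c z y * D z y := fun z =>
    Fintype.sum_eq_add x y hxy fun w hw => by rw [hsymm, hsupp w z hw.1 hw.2, zero_mul]
  have houter : ∑ z, ∑ w, c z w * D z w = ∑ w, c x w * D x w + ∑ w, c y w * D y w :=
    Fintype.sum_eq_add x y hxy fun z hz =>
      sum_eq_zero fun w _ => by rw [hsupp z w hz.1 hz.2, zero_mul]
  rw [pairEnergy, houter, hinner, hinner, hself, hself, hsymm y x, hD y x]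
  ring

theorem ceff_le_of_support_pair (hnn : ∀ z w, 0 ≤ c z w) (hsymm : ∀ z w, c z w = c w z)
    (hxy : x ≠ y) (hsupp : ∀ z w, z ≠ x → z ≠ y → c z w = 0) : ceff c x y ≤ c x y := by
  classical
  let h : V → ℝ := Pi.single x 1
  have hx : h x = 1 := Pi.single_eq_same x 1
  have hy : h y = 0 := Pi.single_eq_of_ne' hxy 1
  calc ceff c x y ≤ elEnergy c h := ceff_le_elEnergy hnn hx hy
    _ = c x y * (h x - h y) ^ 2 :=
      pairEnergy_eq_of_support_pair hsymm hxy hsupp (D := fun z w => (h z - h w) ^ 2)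
        (fun z w => sub_sq_comm (h z) (h w)) fun z => by rw [sub_self, zero_pow two_ne_zero]
    _ = c x y := by rw [hx, hy, sub_zero, one_pow, mul_one]

end EffectiveConductance

section StarMesh

variable [DecidableEq V]

/-- The sum of the conductances between `o` and the other sites. -/
def starConductance (c : V → V → ℝ) (o : V) : ℝ :=
  ∑ z ∈ univ.erase o, c o z

/-- The row at `o` of the negative of the network Laplacian: weights of total mass zero. -/
def starCharge (c : V → V → ℝ) (o : V) : V → ℝ :=
  Function.update (c o) o (-starConductance c o)

/-- The conductances after eliminating the site `o` by the star-mesh transformation. An isolated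
site is simply removed, as division by zero gives zero. -/
def starMesh (c : V → V → ℝ) (o z w : V) : ℝ :=
  if z = o ∨ w = o then 0 else c z w + c o z * c o w / starConductance c o

theorem starCharge_self (c : V → V → ℝ) (o : V) : starCharge c o o = -starConductance c o :=
  Function.update_self ..

theorem starCharge_of_ne (c : V → V → ℝ) {o z : V} (hz : z ≠ o) : starCharge c o z = c o z :=
  Function.update_of_ne hz ..

theorem sum_starCharge (c : V → V → ℝ) (o : V) : ∑ z, starCharge c o z = 0 := by
  rw [starCharge, sum_update_of_mem (mem_univ o), ← erase_eq, starConductance, neg_add_cancel]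

theorem starMesh_eq_zero (c : V → V → ℝ) {o z w : V} (h : z = o ∨ w = o) :
    starMesh c o z w = 0 :=
  if_pos h

variable {c : V → V → ℝ} {o : V}

theorem starMesh_symm (hsymm : ∀ z w, c z w = c w z) (z w : V) :
    starMesh c o z w = starMesh c o w z := by
  simp only [starMesh, or_comm (a := z = o), hsymm z w, mul_comm (c o z)]

theorem elEnergy_starMesh_update (h : V → ℝ) (m : ℝ) :
    elEnergy (starMesh c o) (Function.update h o m) = elEnergy (starMesh c o) h := by
  refine congrArg (1 / 2 * ·) (sum_congr rfl fun z _ => sum_congr rfl fun w _ => ?_)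
  by_cases hzw : z = o ∨ w = o
  · rw [starMesh_eq_zero c hzw, zero_mul, zero_mul]
  · obtain ⟨hz, hw⟩ := not_or.1 hzw
    rw [Function.update_of_ne hz, Function.update_of_ne hw]

variable (hnn : ∀ z w, 0 ≤ c z w)
include hnn

theorem starConductance_nonneg : 0 ≤ starConductance c o :=
  sum_nonneg fun z _ => hnn o z

theorem starMesh_nonneg (z w : V) : 0 ≤ starMesh c o z w := by
  unfold starMesh
  split_ifs
  exacts [le_rfl, add_nonneg (hnn z w)
    (div_nonneg (mul_nonneg (hnn o z) (hnn o w)) (starConductance_nonneg hnn))]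

theorem starCharge_eq_zero (hC : starConductance c o = 0) (z : V) : starCharge c o z = 0 := by
  by_cases hz : z = o
  · rw [hz, starCharge_self, hC, neg_zero]
  · rw [starCharge_of_ne c hz]
    exact (sum_eq_zero_iff_of_nonneg fun z _ => hnn o z).1 hC z (mem_erase.2 ⟨hz, mem_univ z⟩)

theorem eq_starMesh_sub (hsymm : ∀ z w, c z w = c w z) {z w : V} (h : z ≠ o ∨ w ≠ o) :
    c z w = starMesh c o z w - starCharge c o z * starCharge c o w / starConductance c o := by
  wlog hw : w ≠ o generalizing z w
  · rw [hsymm, this h.symm (h.resolve_right hw), starMesh_symm hsymm, mul_comm (starCharge c o z)]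
  by_cases hz : z = o
  · rw [hz, starMesh_eq_zero c (.inl rfl), starCharge_self, ← starCharge_of_ne c hw]
    by_cases hC : starConductance c o = 0
    · rw [starCharge_eq_zero hnn hC, mul_zero, zero_div, sub_zero]
    · field_simp
      ring
  · rw [starMesh, if_neg (not_or.2 ⟨hz, hw⟩), starCharge_of_ne c hz, starCharge_of_ne c hw,
      add_sub_cancel_right]

theorem pairEnergy_eq_pairEnergy_starMesh_sub (hsymm : ∀ z w, c z w = c w z) {D : V → V → ℝ}
    (hD : D o o = 0) :
    pairEnergy c D = pairEnergy (starMesh c o) D -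
      1 / 2 * (quadraticSum (starCharge c o) D / starConductance c o) := by
  have hpoint : ∀ z w, c z w * D z w = starMesh c o z w * D z w -
      starCharge c o z * starCharge c o w * D z w / starConductance c o := by
    intro z w
    by_cases h : z ≠ o ∨ w ≠ o
    · conv_lhs => rw [eq_starMesh_sub hnn hsymm h, sub_mul, div_mul_eq_mul_div]
    · obtain ⟨rfl, rfl⟩ : z = o ∧ w = o := by rwa [not_or, not_ne_iff, not_ne_iff] at h
      simp only [hD, mul_zero, zero_div, sub_zero]
  simp only [pairEnergy, quadraticSum_eq_sum, hpoint, sum_sub_distrib, sum_div, mul_sub]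

theorem exists_wsum_starCharge_update_eq_zero (o : V) (h : V → ℝ) :
    ∃ m, wsum (starCharge c o) (Function.update h o m) = 0 := by
  by_cases hC : starConductance c o = 0
  · exact ⟨0, by simp only [wsum, starCharge_eq_zero hnn hC, zero_mul, sum_const_zero]⟩
  · refine ⟨(∑ z ∈ univ.erase o, c o z * h z) / starConductance c o, ?_⟩
    have hoff : ∀ m, ∑ z ∈ univ.erase o, starCharge c o z * Function.update h o m z =
        ∑ z ∈ univ.erase o, c o z * h z := fun m => sum_congr rfl fun z hz => by
      rw [starCharge_of_ne c (ne_of_mem_erase hz), Function.update_of_ne (ne_of_mem_erase hz)]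
    rw [wsum, ← sum_erase_add _ _ (mem_univ o), hoff, starCharge_self, Function.update_self,
      neg_mul, mul_div_cancel₀ _ hC, add_neg_cancel]

variable {x y : V}

theorem ceff_le_ceff_starMesh (hsymm : ∀ z w, c z w = c w z) (hxy : x ≠ y) (hxo : x ≠ o)
    (hyo : y ≠ o) : ceff c x y ≤ ceff (starMesh c o) x y := by
  refine le_ceff hxy fun h hx hy => ?_
  -- Extend `h` from the other sites to `o` by its weighted average.
  obtain ⟨m, hm⟩ := exists_wsum_starCharge_update_eq_zero hnn o h
  set g := Function.update h o m
  have hquad : quadraticSum (starCharge c o) (fun z w => (g z - g w) ^ 2) = 0 := by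
    rw [quadraticSum_sub_sq (sum_starCharge c o), hm, zero_pow two_ne_zero, mul_zero]
  calc ceff c x y ≤ elEnergy c g :=
        ceff_le_elEnergy hnn ((Function.update_of_ne hxo ..).trans hx)
          ((Function.update_of_ne hyo ..).trans hy)
    _ = elEnergy (starMesh c o) g -
          1 / 2 * (quadraticSum (starCharge c o) (fun z w => (g z - g w) ^ 2) /
            starConductance c o) :=
        pairEnergy_eq_pairEnergy_starMesh_sub hnn hsymm (by rw [sub_self, zero_pow two_ne_zero])
    _ = elEnergy (starMesh c o) h := by
        rw [hquad, zero_div, mul_zero, sub_zero, elEnergy_starMesh_update]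

theorem pairEnergy_starMesh_le (hsymm : ∀ z w, c z w = c w z) {D : V → V → ℝ}
    (hD : IsOctopusKernel D) (o : V) : pairEnergy (starMesh c o) D ≤ pairEnergy c D := by
  have hquad : quadraticSum (starCharge c o) D ≤ 0 :=
    hD.quadraticSum_nonpos o _ (sum_starCharge c o) fun z hz =>
      (starCharge_of_ne c hz).symm ▸ hnn o z
  rw [pairEnergy_eq_pairEnergy_starMesh_sub hnn hsymm (hD.self o)]
  linarith [div_nonpos_of_nonpos_of_nonneg hquad (starConductance_nonneg hnn (o := o))]

end StarMesh

theorem ceff_mul_le_pairEnergy {D : V → V → ℝ} (hD : IsOctopusKernel D) {c : V → V → ℝ}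
    (hnn : ∀ z w, 0 ≤ c z w) (hsymm : ∀ z w, c z w = c w z) {x y : V} (hxy : x ≠ y) :
    ceff c x y * D x y ≤ pairEnergy c D := by
  classical
  suffices hind : ∀ (S : Finset V) (c : V → V → ℝ), x ∉ S → y ∉ S → (∀ z w, 0 ≤ c z w) →
      (∀ z w, c z w = c w z) → (∀ z w, z ∉ S → z ≠ x → z ≠ y → c z w = 0) →
      ceff c x y * D x y ≤ pairEnergy c D by
    refine hind {x, y}ᶜ c (by simp) (by simp) hnn hsymm fun z w hz hzx hzy => ?_
    simp [hzx, hzy] at hz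
  intro S
  induction S using Finset.induction_on with
  | empty =>
    intro c _ _ hnn hsymm hsupp
    replace hsupp : ∀ z w, z ≠ x → z ≠ y → c z w = 0 := fun z w => hsupp z w (notMem_empty z)
    rw [pairEnergy_eq_of_support_pair hsymm hxy hsupp hD.symm hD.self]
    exact mul_le_mul_of_nonneg_right (ceff_le_of_support_pair hnn hsymm hxy hsupp) (hD.nonneg x y)
  | insert o S _ ih =>
    intro c hxS hyS hnn hsymm hsupp
    rw [mem_insert, not_or] at hxS hyS
    have hmesh_supp : ∀ z w, z ∉ S → z ≠ x → z ≠ y → starMesh c o z w = 0 := by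
      intro z w hz hzx hzy
      by_cases hzo : z = o
      · exact starMesh_eq_zero c (.inl hzo)
      · have hzero : ∀ w, c z w = 0 := fun w => hsupp z w (by simp [hz, hzo]) hzx hzy
        simp [starMesh, hzero, hsymm o z]
    calc ceff c x y * D x y ≤ ceff (starMesh c o) x y * D x y :=
          mul_le_mul_of_nonneg_right (ceff_le_ceff_starMesh hnn hsymm hxy hxS.1 hyS.1)
            (hD.nonneg x y)
      _ ≤ pairEnergy (starMesh c o) D :=
          ih _ hxS.2 hyS.2 (starMesh_nonneg hnn) (starMesh_symm hsymm) hmesh_supp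
      _ ≤ pairEnergy c D := pairEnergy_starMesh_le hnn hsymm hD o

end Network

section ExchangeableWeights

variable {V : Type*} [Fintype V]

theorem bweight_nonneg {α : ℝ} (hα0 : 0 ≤ α) (hα1 : α ≤ 1) (ζ : V → Bool) : 0 ≤ bweight α ζ :=
  prod_nonneg fun v _ => by
    split_ifs
    exacts [hα0, sub_nonneg.2 hα1]

variable [DecidableEq V]

theorem bweight_comp_swap (α : ℝ) (ζ : V → Bool) (z w : V) :
    bweight α (ζ ∘ Equiv.swap z w) = bweight α ζ :=
  Equiv.prod_comp (Equiv.swap z w) fun v => if ζ v then α else 1 - α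

theorem sum_mul_sq_eq_exchangeEnergy {β : Type*} [Fintype β] {μ : (V → β) → ℝ} (hμ : ∀ ζ, 0 ≤ μ ζ)
    (hswap : ∀ ζ z w, μ (ζ ∘ Equiv.swap z w) = μ ζ) (f : (V → β) → ℝ) (z w : V) :
    ∑ ζ, μ ζ * (f (ζ ∘ Equiv.swap z w) - f ζ) ^ 2 =
      exchangeEnergy (fun ζ => √(μ ζ) * f ζ) z w := by
  refine sum_congr rfl fun ζ _ => ?_
  simp only [hswap]
  linear_combination -(f (ζ ∘ Equiv.swap z w) - f ζ) ^ 2 * Real.mul_self_sqrt (hμ ζ)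

end ExchangeableWeights

theorem moving_particle_lemma_exclusion_general {V : Type*} [Fintype V] [DecidableEq V]
    (c : V → V → ℝ) (hnn : ∀ z w, 0 ≤ c z w) (hsymm : ∀ z w, c z w = c w z)
    (x y : V) (hxy : x ≠ y) (hreach : (SimpleGraph.fromRel fun z w => 0 < c z w).Reachable x y)
    (μ : (V → Bool) → ℝ) (hμ : ∀ ζ, 0 ≤ μ ζ) (hswap : ∀ ζ z w, μ (ζ ∘ Equiv.swap z w) = μ ζ)
    (f : (V → Bool) → ℝ) :
    (1 / 2) * ∑ ζ, μ ζ * (f (ζ ∘ Equiv.swap x y) - f ζ) ^ 2 ≤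
      (ceff c x y)⁻¹ * ((1 / 2) * ((1 / 2) * ∑ z, ∑ w, c z w *
        ∑ ζ, μ ζ * (f (ζ ∘ Equiv.swap z w) - f ζ) ^ 2)) := by
  simp only [sum_mul_sq_eq_exchangeEnergy hμ hswap]
  rw [← pairEnergy, mul_left_comm]
  refine mul_le_mul_of_nonneg_left ?_ one_half_pos.le
  rw [le_inv_mul_iff₀ (ceff_pos hnn hsymm hxy hreach)]
  exact ceff_mul_le_pairEnergy (isOctopusKernel_exchangeEnergy _) hnn hsymm hxy

theorem moving_particle_lemma_exclusion {V : Type*} [Fintype V] [DecidableEq V]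
    (c : V → V → ℝ) (hnn : ∀ z w, 0 ≤ c z w) (hsymm : ∀ z w, c z w = c w z)
    (hdiag : ∀ z, c z z = 0)
    (hconn : (SimpleGraph.fromRel fun z w => 0 < c z w).Connected)
    (α : ℝ) (hα0 : 0 ≤ α) (hα1 : α ≤ 1)
    (x y : V) (hxy : x ≠ y) (f : (V → Bool) → ℝ) :
    (1 / 2) * bexp α (fun ζ => (f (ζ ∘ Equiv.swap x y) - f ζ) ^ 2) ≤
      (ceff c x y)⁻¹ * ((1 / 2) * ((1 / 2) * ∑ z, ∑ w, c z w *
        bexp α (fun ζ => (f (ζ ∘ Equiv.swap z w) - f ζ) ^ 2))) := by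
  exact moving_particle_lemma_exclusion_general c hnn hsymm x y hxy (hconn.preconnected x y)
    (bweight α) (bweight_nonneg hα0 hα1) (bweight_comp_swap α) f
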